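/- arXiv:2104.04589 — 3 statements merged into one kernel-verified Lean document; each statement's English description precedes it below -/
import Mathlib

section
/- The law of excluded middle and the law of non-contradiction hold classically in PRK: for every pure proposition A, the judgments ⊢ (A ∨ ¬A)⊕ and ⊢ (A ∧ ¬A)⊖ (with empty context) are derivable in PRK. -/
/-- Pure propositions: A ::= α | A∧B | A∨B | ¬A -/
inductive PureProp : Type
  | var : ℕ → PureProp
  | conj : PureProp → PureProp → PureProp
  | disj : PureProp → PureProp → PureProp
  | neg : PureProp → PureProp
  deriving DecidableEq

/-- Moded propositions: A⁺ (sp), A⁻ (sn), A⊕ (cp), A⊖ (cn). -/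
inductive MProp : Type
  | sp : PureProp → MProp
  | sn : PureProp → MProp
  | cp : PureProp → MProp
  | cn : PureProp → MProp
  deriving DecidableEq

/-- The opposite P~: flips the sign, keeps the strength. -/
def MProp.opp : MProp → MProp
  | .sp A => .sn A
  | .sn A => .sp A
  | .cp A => .cn A
  | .cn A => .cp A

def MProp.isStrong : MProp → Prop
  | .sp _ => True
  | .sn _ => True
  | .cp _ => False
  | .cn _ => False

def MProp.isClassical : MProp → Prop
  | .sp _ => False
  | .sn _ => False
  | .cp _ => True
  | .cn _ => True

/-- Derivability in system PRK (natural deduction), Γ a finite set of moded propositions. -/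
inductive PRK : Finset MProp → MProp → Prop
  | ax {Γ : Finset MProp} {P : MProp} : P ∈ Γ → PRK Γ P
  | abs {Γ : Finset MProp} {P Q : MProp} :
      P.isStrong → PRK Γ P → PRK Γ P.opp → PRK Γ Q
  | iConjP {Γ A B} : PRK Γ (MProp.cp A) → PRK Γ (MProp.cp B) → PRK Γ (MProp.sp (PureProp.conj A B))
  | eConjP1 {Γ A B} : PRK Γ (MProp.sp (PureProp.conj A B)) → PRK Γ (MProp.cp A)
  | eConjP2 {Γ A B} : PRK Γ (MProp.sp (PureProp.conj A B)) → PRK Γ (MProp.cp B)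
  | iDisjP1 {Γ A B} : PRK Γ (MProp.cp A) → PRK Γ (MProp.sp (PureProp.disj A B))
  | iDisjP2 {Γ A B} : PRK Γ (MProp.cp B) → PRK Γ (MProp.sp (PureProp.disj A B))
  | eDisjP {Γ A B P} : PRK Γ (MProp.sp (PureProp.disj A B)) →
      PRK (insert (MProp.cp A) Γ) P → PRK (insert (MProp.cp B) Γ) P → PRK Γ P
  | iNegP {Γ A} : PRK Γ (MProp.cn A) → PRK Γ (MProp.sp (PureProp.neg A))
  | eNegP {Γ A} : PRK Γ (MProp.sp (PureProp.neg A)) → PRK Γ (MProp.cn A)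
  | icP {Γ A} : PRK (insert (MProp.cn A) Γ) (MProp.sp A) → PRK Γ (MProp.cp A)
  | ecP {Γ A} : PRK Γ (MProp.cp A) → PRK Γ (MProp.cn A) → PRK Γ (MProp.sp A)
  | iDisjN {Γ A B} : PRK Γ (MProp.cn A) → PRK Γ (MProp.cn B) → PRK Γ (MProp.sn (PureProp.disj A B))
  | eDisjN1 {Γ A B} : PRK Γ (MProp.sn (PureProp.disj A B)) → PRK Γ (MProp.cn A)
  | eDisjN2 {Γ A B} : PRK Γ (MProp.sn (PureProp.disj A B)) → PRK Γ (MProp.cn B)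
  | iConjN1 {Γ A B} : PRK Γ (MProp.cn A) → PRK Γ (MProp.sn (PureProp.conj A B))
  | iConjN2 {Γ A B} : PRK Γ (MProp.cn B) → PRK Γ (MProp.sn (PureProp.conj A B))
  | eConjN {Γ A B P} : PRK Γ (MProp.sn (PureProp.conj A B)) →
      PRK (insert (MProp.cn A) Γ) P → PRK (insert (MProp.cn B) Γ) P → PRK Γ P
  | iNegN {Γ A} : PRK Γ (MProp.cp A) → PRK Γ (MProp.sn (PureProp.neg A))
  | eNegN {Γ A} : PRK Γ (MProp.sn (PureProp.neg A)) → PRK Γ (MProp.cp A)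
  | icN {Γ A} : PRK (insert (MProp.cp A) Γ) (MProp.sn A) → PRK Γ (MProp.cn A)
  | ecN {Γ A} : PRK Γ (MProp.cn A) → PRK Γ (MProp.cp A) → PRK Γ (MProp.sn A)

/-!
The plain elimination rules only apply to the strong `(A ∨ B)⁻`, but the classical `(A ∨ B)⊖` still
refutes each disjunct: assuming `A⊕` would give `(A ∨ B)⁺`, hence `(A ∨ B)⊕`, and opposite classical
propositions are as absurd as strong ones. So under the assumption `(A ∨ ¬A)⊖` one gets `A⊖`, hence
`(¬A)⁺` and `(A ∨ ¬A)⁺`, and `IC⁺` discharges the assumption. Non-contradiction is the dual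
argument.
-/

namespace PRK

open MProp PureProp

variable {Γ Δ : Finset MProp} {P Q : MProp} {A B : PureProp}

theorem weakening (h : PRK Γ P) (hΓ : Γ ⊆ Δ) : PRK Δ P := by
  induction h generalizing Δ with
  | ax hP => exact .ax (hΓ hP)
  | abs hP _ _ ih ihOpp => exact .abs hP (ih hΓ) (ihOpp hΓ)
  | iConjP _ _ ihA ihB => exact .iConjP (ihA hΓ) (ihB hΓ)
  | eConjP1 _ ih => exact .eConjP1 (ih hΓ)
  | eConjP2 _ ih => exact .eConjP2 (ih hΓ)
  | iDisjP1 _ ih => exact .iDisjP1 (ih hΓ)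
  | iDisjP2 _ ih => exact .iDisjP2 (ih hΓ)
  | eDisjP _ _ _ ih ihA ihB =>
    exact .eDisjP (ih hΓ) (ihA (Finset.insert_subset_insert _ hΓ))
      (ihB (Finset.insert_subset_insert _ hΓ))
  | iNegP _ ih => exact .iNegP (ih hΓ)
  | eNegP _ ih => exact .eNegP (ih hΓ)
  | icP _ ih => exact .icP (ih (Finset.insert_subset_insert _ hΓ))
  | ecP _ _ ihPos ihNeg => exact .ecP (ihPos hΓ) (ihNeg hΓ)
  | iDisjN _ _ ihA ihB => exact .iDisjN (ihA hΓ) (ihB hΓ)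
  | eDisjN1 _ ih => exact .eDisjN1 (ih hΓ)
  | eDisjN2 _ ih => exact .eDisjN2 (ih hΓ)
  | iConjN1 _ ih => exact .iConjN1 (ih hΓ)
  | iConjN2 _ ih => exact .iConjN2 (ih hΓ)
  | eConjN _ _ _ ih ihA ihB =>
    exact .eConjN (ih hΓ) (ihA (Finset.insert_subset_insert _ hΓ))
      (ihB (Finset.insert_subset_insert _ hΓ))
  | iNegN _ ih => exact .iNegN (ih hΓ)
  | eNegN _ ih => exact .eNegN (ih hΓ)
  | icN _ ih => exact .icN (ih (Finset.insert_subset_insert _ hΓ))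
  | ecN _ _ ihNeg ihPos => exact .ecN (ihNeg hΓ) (ihPos hΓ)

theorem weakening_insert (h : PRK Γ P) : PRK (insert Q Γ) P :=
  h.weakening (Finset.subset_insert Q Γ)

theorem ax_insert : PRK (insert P Γ) P :=
  .ax (Finset.mem_insert_self P Γ)

theorem explosion (h : PRK Γ P) (hOpp : PRK Γ P.opp) : PRK Γ Q :=
  match P with
  | sp A => .abs (P := sp A) trivial h hOpp
  | sn A => .abs (P := sn A) trivial h hOpp
  | cp A => .abs (P := sp A) trivial (.ecP h hOpp) (.ecN hOpp h)
  | cn A => .abs (P := sn A) trivial (.ecN h hOpp) (.ecP hOpp h)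

theorem cp_of_sp (h : PRK Γ (sp A)) : PRK Γ (cp A) :=
  .icP h.weakening_insert

theorem cn_of_sn (h : PRK Γ (sn A)) : PRK Γ (cn A) :=
  .icN h.weakening_insert

theorem cn_left_of_cn_disj (h : PRK Γ (cn (disj A B))) : PRK Γ (cn A) :=
  have hDisj : PRK (insert (cp A) Γ) (cp (disj A B)) := cp_of_sp (.iDisjP1 ax_insert)
  .icN (hDisj.explosion h.weakening_insert)

theorem cp_left_of_cp_conj (h : PRK Γ (cp (conj A B))) : PRK Γ (cp A) :=
  have hConj : PRK (insert (cn A) Γ) (cn (conj A B)) := cn_of_sn (.iConjN1 ax_insert)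
  .icP (hConj.explosion h.weakening_insert)

theorem excluded_middle (Γ : Finset MProp) (A : PureProp) : PRK Γ (cp (disj A (neg A))) :=
  have hA : PRK (insert (cn (disj A (neg A))) Γ) (cn A) := cn_left_of_cn_disj ax_insert
  .icP (.iDisjP2 (cp_of_sp (.iNegP hA)))

theorem noncontradiction (Γ : Finset MProp) (A : PureProp) : PRK Γ (cn (conj A (neg A))) :=
  have hA : PRK (insert (cp (conj A (neg A))) Γ) (cp A) := cp_left_of_cp_conj ax_insert
  .icN (.iConjN2 (cn_of_sn (.iNegN hA)))

end PRK

/-- The law of excluded middle and the law of non-contradiction hold classically in PRK. -/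
theorem lem_and_noncontradiction (A : PureProp) :
    PRK ∅ (MProp.cp (PureProp.disj A (PureProp.neg A))) ∧
    PRK ∅ (MProp.cn (PureProp.conj A (PureProp.neg A))) :=
  ⟨PRK.excluded_middle ∅ A, PRK.noncontradiction ∅ A⟩
end

section
/- Rule of classical forcing: in any Kripke model for PRK, for every world w and pure proposition A: (1) w ⊩ A⊕ if and only if for all w' ≥ w, w' ⊩ A⊖ implies w' ⊩ A⁺; and (2) w ⊩ A⊖ if and only if for all w' ≥ w, w' ⊩ A⊕ implies w' ⊩ A⁻. -/
/-- A Kripke model for PRK. -/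
structure KripkeModel (W : Type) where
  le : W → W → Prop
  le_refl : ∀ w, le w w
  le_trans : ∀ {a b c}, le a b → le b c → le a c
  le_antisymm : ∀ {a b}, le a b → le b a → a = b
  Vp : W → ℕ → Prop
  Vn : W → ℕ → Prop
  monoP : ∀ {w w'}, le w w' → ∀ {a}, Vp w a → Vp w' a
  monoN : ∀ {w w'}, le w w' → ∀ {a}, Vn w a → Vn w' a
  stab : ∀ w a, ∃ w', le w w' ∧ Xor' (Vp w' a) (Vn w' a)

def PureProp.size : PureProp → ℕ
  | .var _ => 1
  | .conj A B => 1 + A.size + B.size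
  | .disj A B => 1 + A.size + B.size
  | .neg A => 1 + A.size

def MProp.meas : MProp → ℕ
  | .sp A => 2 * A.size
  | .sn A => 2 * A.size
  | .cp A => 2 * A.size + 1
  | .cn A => 2 * A.size + 1

/-- The forcing relation w ⊩ P, defined by recursion on the measure. -/
def Forces {W : Type} (M : KripkeModel W) : W → MProp → Prop
  | w, .sp (.var a) => M.Vp w a
  | w, .sn (.var a) => M.Vn w a
  | w, .sp (.conj A B) => Forces M w (.cp A) ∧ Forces M w (.cp B)
  | w, .sn (.conj A B) => Forces M w (.cn A) ∨ Forces M w (.cn B)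
  | w, .sp (.disj A B) => Forces M w (.cp A) ∨ Forces M w (.cp B)
  | w, .sn (.disj A B) => Forces M w (.cn A) ∧ Forces M w (.cn B)
  | w, .sp (.neg A) => Forces M w (.cn A)
  | w, .sn (.neg A) => Forces M w (.cp A)
  | w, .cp A => ∀ w', M.le w w' → ¬ Forces M w' (.sn A)
  | w, .cn A => ∀ w', M.le w w' → ¬ Forces M w' (.sp A)
termination_by w P => P.meas
decreasing_by all_goals simp [MProp.meas, PureProp.size] <;> omega

/-!
In the Heyting algebra of upper sets of worlds, `A⊕` and `A⊖` denote the pseudocomplements of `A⁻`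
and `A⁺`. The heart of the matter is that `A⁺` and `A⁻` denote disjoint upper sets whose union is
dense (`¬(A⁺ ∨ A⁻)` is `⊥`). Such pairs are closed under exchanging the two sides, under replacing
`(s, t)` by `(¬t, ¬s)`, and under intersecting the left sides while uniting the right ones. As
stabilization and monotonicity make the variables into such pairs, induction reaches every
proposition.

For such a pair `(s, t)` one has `¬t = (¬s → s)`: density makes `¬t` and `¬s` disjoint, so `¬t`
entails `¬s → s`; conversely `t` entails `¬s` by disjointness, so a point of `t` satisfying
`¬s → s` would lie in both `s` and `t`.
-/

section Preorder

variable {α : Type*} [Preorder α] {s t s₁ t₁ s₂ t₂ : Set α}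

/-- The intuitionistic negation of `s` in Kripke semantics: the largest upper set disjoint from `s`,
written pointwise so as to match the forcing clauses of `A⊕` and `A⊖`. -/
def upperCompl (s : Set α) : Set α :=
  {x | ∀ y, x ≤ y → y ∉ s}

theorem isUpperSet_upperCompl (s : Set α) : IsUpperSet (upperCompl s) :=
  fun _ _ hxy hx z hyz => hx z (hxy.trans hyz)

/-- Disjoint upper sets with dense union: the property shared by the sets of worlds forcing `A⁺` and
`A⁻`. Density in the topology of upper sets is expressed as cofinality. -/
structure IsDenseSplitting (s t : Set α) : Prop where
  isUpperSet_left : IsUpperSet s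
  isUpperSet_right : IsUpperSet t
  disjoint : Disjoint s t
  isCofinal : IsCofinal (s ∪ t)

namespace IsDenseSplitting

theorem symm (h : IsDenseSplitting s t) : IsDenseSplitting t s where
  isUpperSet_left := h.isUpperSet_right
  isUpperSet_right := h.isUpperSet_left
  disjoint := h.disjoint.symm
  isCofinal := Set.union_comm s t ▸ h.isCofinal

theorem subset_upperCompl (h : IsDenseSplitting s t) : s ⊆ upperCompl t :=
  fun _ hx _ hxy => h.disjoint.notMem_of_mem_left (h.isUpperSet_left hxy hx)

theorem disjoint_upperCompl (h : IsDenseSplitting s t) :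
    Disjoint (upperCompl t) (upperCompl s) := by
  refine Set.disjoint_left.2 fun x hxt hxs => ?_
  obtain ⟨y, hys | hyt, hxy⟩ := h.isCofinal x
  · exact hxs y hxy hys
  · exact hxt y hxy hyt

protected theorem upperCompl (h : IsDenseSplitting s t) :
    IsDenseSplitting (upperCompl t) (upperCompl s) where
  isUpperSet_left := isUpperSet_upperCompl t
  isUpperSet_right := isUpperSet_upperCompl s
  disjoint := h.disjoint_upperCompl
  isCofinal := h.isCofinal.mono
    (Set.union_subset_union h.subset_upperCompl h.symm.subset_upperCompl)

theorem inter_union (h₁ : IsDenseSplitting s₁ t₁) (h₂ : IsDenseSplitting s₂ t₂) :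
    IsDenseSplitting (s₁ ∩ s₂) (t₁ ∪ t₂) where
  isUpperSet_left := h₁.isUpperSet_left.inter h₂.isUpperSet_left
  isUpperSet_right := h₁.isUpperSet_right.union h₂.isUpperSet_right
  disjoint := Set.disjoint_union_right.2
    ⟨h₁.disjoint.mono_left Set.inter_subset_left, h₂.disjoint.mono_left Set.inter_subset_right⟩
  isCofinal x := by
    obtain ⟨y, hys₁ | hyt₁, hxy⟩ := h₁.isCofinal x
    · obtain ⟨z, hzs₂ | hzt₂, hyz⟩ := h₂.isCofinal y
      · exact ⟨z, .inl ⟨h₁.isUpperSet_left hyz hys₁, hzs₂⟩, hxy.trans hyz⟩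
      · exact ⟨z, .inr (.inr hzt₂), hxy.trans hyz⟩
    · exact ⟨y, .inr (.inl hyt₁), hxy⟩

theorem mem_upperCompl_iff_forall_imp (h : IsDenseSplitting s t) {x : α} :
    x ∈ upperCompl t ↔ ∀ y, x ≤ y → y ∈ upperCompl s → y ∈ s := by
  constructor
  · intro hx y hxy hys
    have hyt : y ∈ upperCompl t := isUpperSet_upperCompl t hxy hx
    exact (h.disjoint_upperCompl.notMem_of_mem_left hyt hys).elim
  · intro hx y hxy hyt
    have hys : y ∈ s := hx y hxy (h.symm.subset_upperCompl hyt)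
    exact h.disjoint.notMem_of_mem_left hys hyt

end IsDenseSplitting

end Preorder

namespace KripkeModel

variable {W : Type} (M : KripkeModel W)

/-- The accessibility order of `M`. It cannot be a global instance, since `W` may underlie several
models. -/
abbrev toPartialOrder : PartialOrder W where
  le := M.le
  le_refl := M.le_refl
  le_trans _ _ _ := M.le_trans
  le_antisymm _ _ := M.le_antisymm

/-- The denotation of `P` in `M`: the set of worlds forcing `P`. -/
def truthSet (P : MProp) : Set W :=
  {w | Forces M w P}

theorem mem_truthSet {w : W} {P : MProp} : w ∈ M.truthSet P ↔ Forces M w P :=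
  Iff.rfl

theorem truthSet_cp (A : PureProp) :
    letI := M.toPartialOrder
    M.truthSet (.cp A) = upperCompl (M.truthSet (.sn A)) :=
  Set.ext fun _ => by rw [mem_truthSet, Forces]; rfl

theorem truthSet_cn (A : PureProp) :
    letI := M.toPartialOrder
    M.truthSet (.cn A) = upperCompl (M.truthSet (.sp A)) :=
  Set.ext fun _ => by rw [mem_truthSet, Forces]; rfl

theorem truthSet_sp_conj (A B : PureProp) :
    M.truthSet (.sp (.conj A B)) = M.truthSet (.cp A) ∩ M.truthSet (.cp B) :=
  Set.ext fun _ => by rw [mem_truthSet, Forces]; rfl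

theorem truthSet_sn_conj (A B : PureProp) :
    M.truthSet (.sn (.conj A B)) = M.truthSet (.cn A) ∪ M.truthSet (.cn B) :=
  Set.ext fun _ => by rw [mem_truthSet, Forces]; rfl

theorem truthSet_sp_disj (A B : PureProp) :
    M.truthSet (.sp (.disj A B)) = M.truthSet (.cp A) ∪ M.truthSet (.cp B) :=
  Set.ext fun _ => by rw [mem_truthSet, Forces]; rfl

theorem truthSet_sn_disj (A B : PureProp) :
    M.truthSet (.sn (.disj A B)) = M.truthSet (.cn A) ∩ M.truthSet (.cn B) :=
  Set.ext fun _ => by rw [mem_truthSet, Forces]; rfl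

theorem truthSet_sp_neg (A : PureProp) : M.truthSet (.sp (.neg A)) = M.truthSet (.cn A) :=
  Set.ext fun _ => by rw [mem_truthSet, Forces]; rfl

theorem truthSet_sn_neg (A : PureProp) : M.truthSet (.sn (.neg A)) = M.truthSet (.cp A) :=
  Set.ext fun _ => by rw [mem_truthSet, Forces]; rfl

theorem truthSet_sp_var (a : ℕ) : M.truthSet (.sp (.var a)) = {w | M.Vp w a} :=
  Set.ext fun _ => by rw [mem_truthSet, Forces]; rfl

theorem truthSet_sn_var (a : ℕ) : M.truthSet (.sn (.var a)) = {w | M.Vn w a} :=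
  Set.ext fun _ => by rw [mem_truthSet, Forces]; rfl

theorem isDenseSplitting_valuation (a : ℕ) :
    letI := M.toPartialOrder
    IsDenseSplitting {w | M.Vp w a} {w | M.Vn w a} := by
  let := M.toPartialOrder
  have disjoint : Disjoint {w | M.Vp w a} {w | M.Vn w a} := by
    refine Set.disjoint_left.2 fun w hp hn => ?_
    -- Both would persist to the later world at which exactly one of them holds.
    obtain ⟨v, hwv, ⟨-, hnv⟩ | ⟨-, hpv⟩⟩ := M.stab w a
    · exact hnv (M.monoN hwv hn)
    · exact hpv (M.monoP hwv hp)
  have isCofinal : IsCofinal ({w | M.Vp w a} ∪ {w | M.Vn w a}) := fun w =>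
    let ⟨v, hwv, hv⟩ := M.stab w a
    ⟨v, Xor.or hv, hwv⟩
  exact ⟨fun _ _ hwv => M.monoP hwv, fun _ _ hwv => M.monoN hwv, disjoint, isCofinal⟩

theorem isDenseSplitting_truthSet (A : PureProp) :
    letI := M.toPartialOrder
    IsDenseSplitting (M.truthSet (.sp A)) (M.truthSet (.sn A)) := by
  let := M.toPartialOrder
  have cp_cn {B : PureProp} (h : IsDenseSplitting (M.truthSet (.sp B)) (M.truthSet (.sn B))) :
      IsDenseSplitting (M.truthSet (.cp B)) (M.truthSet (.cn B)) := by
    rw [truthSet_cp, truthSet_cn]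
    exact h.upperCompl
  induction A with
  | var a =>
    rw [truthSet_sp_var, truthSet_sn_var]
    exact M.isDenseSplitting_valuation a
  | conj A B ihA ihB =>
    rw [truthSet_sp_conj, truthSet_sn_conj]
    exact (cp_cn ihA).inter_union (cp_cn ihB)
  | disj A B ihA ihB =>
    rw [truthSet_sp_disj, truthSet_sn_disj]
    exact ((cp_cn ihA).symm.inter_union (cp_cn ihB).symm).symm
  | neg A ih =>
    rw [truthSet_sp_neg, truthSet_sn_neg]
    exact (cp_cn ih).symm

end KripkeModel

/-- Rule of classical forcing. -/
theorem rule_of_classical_forcing {W : Type} (M : KripkeModel W) (w : W) (A : PureProp) :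
    (Forces M w (MProp.cp A) ↔
      ∀ w', M.le w w' → Forces M w' (MProp.cn A) → Forces M w' (MProp.sp A)) ∧
    (Forces M w (MProp.cn A) ↔
      ∀ w', M.le w w' → Forces M w' (MProp.cp A) → Forces M w' (MProp.sn A)) := by
  let := M.toPartialOrder
  have split : IsDenseSplitting (M.truthSet (.sp A)) (M.truthSet (.sn A)) :=
    M.isDenseSplitting_truthSet A
  have cp_iff := split.mem_upperCompl_iff_forall_imp (x := w)
  have cn_iff := split.symm.mem_upperCompl_iff_forall_imp (x := w)
  rw [← M.truthSet_cp, ← M.truthSet_cn] at cp_iff cn_iff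
  exact ⟨cp_iff, cn_iff⟩
end

section
/- Saturation lemma: let Γ be a consistent (possibly infinite) set of moded propositions and Q a moded proposition such that Γ ⊬ Q. Then there exists a prime theory Γ' ⊇ Γ such that Γ' ⊬ Q. -/
/-- Derivability from a possibly infinite set of moded propositions. -/
def SDeriv (Γ : Set MProp) (P : MProp) : Prop :=
  ∃ Δ : Finset MProp, ↑Δ ⊆ Γ ∧ PRK Δ P

/-- Consistency of a possibly infinite set of moded propositions. -/
def SetConsistent (Γ : Set MProp) : Prop := ∃ P, ¬ SDeriv Γ P

/-- A prime theory: closed by deduction, consistent, and disjunctive. -/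
def PrimeTheory (Γ : Set MProp) : Prop :=
  (∀ P, SDeriv Γ P → P ∈ Γ) ∧
  SetConsistent Γ ∧
  (∀ A B, MProp.sp (PureProp.disj A B) ∈ Γ → MProp.cp A ∈ Γ ∨ MProp.cp B ∈ Γ) ∧
  (∀ A B, MProp.sn (PureProp.conj A B) ∈ Γ → MProp.cn A ∈ Γ ∨ MProp.cn B ∈ Γ)

/-- Every finite context extending `Δ` derives all of `Γ`. Quantifying over the extensions of `Δ`
makes this stable under adding a common hypothesis to both sides (`StablyDerives.insert`) before
weakening is available, so that one induction on derivations yields both weakening and cut. -/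
def StablyDerives (Δ Γ : Finset MProp) : Prop :=
  ∀ ⦃Δ' : Finset MProp⦄, Δ ⊆ Δ' → ∀ P ∈ Γ, PRK Δ' P

theorem StablyDerives.of_subset {Γ Δ : Finset MProp} (h : Γ ⊆ Δ) : StablyDerives Δ Γ :=
  fun _ hΔ _ hP => .ax (hΔ (h hP))

theorem StablyDerives.insert {Γ Δ : Finset MProp} (h : StablyDerives Δ Γ) (X : MProp) :
    StablyDerives (insert X Δ) (insert X Γ) := by
  intro Δ' hΔ P hP
  obtain ⟨hX, hΔ⟩ := Finset.insert_subset_iff.1 hΔ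
  rcases Finset.mem_insert.1 hP with rfl | hP
  · exact .ax hX
  · exact h hΔ P hP

namespace PRK

variable {Γ Δ : Finset MProp} {P Q : MProp}

theorem of_stablyDerives (d : PRK Γ Q) (h : StablyDerives Δ Γ) : PRK Δ Q := by
  induction d generalizing Δ with
  | ax hP => exact h subset_rfl _ hP
  | abs hP _ _ ih₁ ih₂ => exact .abs hP (ih₁ h) (ih₂ h)
  | iConjP _ _ ihA ihB => exact .iConjP (ihA h) (ihB h)
  | eConjP1 _ ih => exact .eConjP1 (ih h)
  | eConjP2 _ ih => exact .eConjP2 (ih h)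
  | iDisjP1 _ ih => exact .iDisjP1 (ih h)
  | iDisjP2 _ ih => exact .iDisjP2 (ih h)
  | eDisjP _ _ _ ih ihA ihB => exact .eDisjP (ih h) (ihA (h.insert _)) (ihB (h.insert _))
  | iNegP _ ih => exact .iNegP (ih h)
  | eNegP _ ih => exact .eNegP (ih h)
  | icP _ ih => exact .icP (ih (h.insert _))
  | ecP _ _ ih₁ ih₂ => exact .ecP (ih₁ h) (ih₂ h)
  | iDisjN _ _ ihA ihB => exact .iDisjN (ihA h) (ihB h)
  | eDisjN1 _ ih => exact .eDisjN1 (ih h)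
  | eDisjN2 _ ih => exact .eDisjN2 (ih h)
  | iConjN1 _ ih => exact .iConjN1 (ih h)
  | iConjN2 _ ih => exact .iConjN2 (ih h)
  | eConjN _ _ _ ih ihA ihB => exact .eConjN (ih h) (ihA (h.insert _)) (ihB (h.insert _))
  | iNegN _ ih => exact .iNegN (ih h)
  | eNegN _ ih => exact .eNegN (ih h)
  | icN _ ih => exact .icN (ih (h.insert _))
  | ecN _ _ ih₁ ih₂ => exact .ecN (ih₁ h) (ih₂ h)

theorem weaken (d : PRK Γ Q) (h : Γ ⊆ Δ) : PRK Δ Q :=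
  d.of_stablyDerives (.of_subset h)

theorem cut (dP : PRK Γ P) (dQ : PRK (insert P Γ) Q) : PRK Γ Q := by
  refine dQ.of_stablyDerives fun Δ hΔ R hR => ?_
  rcases Finset.mem_insert.1 hR with rfl | hR
  · exact dP.weaken hΔ
  · exact .ax (hΔ hR)

end PRK

namespace SDeriv

variable {Γ : Set MProp} {P Q X Y : MProp}

theorem of_mem (h : P ∈ Γ) : SDeriv Γ P :=
  ⟨{P}, by simpa using h, .ax (Finset.mem_singleton_self P)⟩

theorem exists_finset_insert (h : SDeriv (insert P Γ) Q) :
    ∃ Δ : Finset MProp, ↑Δ ⊆ Γ ∧ PRK (insert P Δ) Q := by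
  obtain ⟨Δ, hΔ, d⟩ := h
  refine ⟨Δ.erase P, ?_, d.weaken (Finset.insert_erase_subset P Δ)⟩
  simpa [Set.sdiff_singleton_subset_iff] using hΔ

/-- Covers `E∨⁺` and `E∧⁻`, and also cut, by taking `X = Y = P`. -/
theorem elim_cases
    (rule : ∀ {Δ : Finset MProp},
      PRK Δ P → PRK (insert X Δ) Q → PRK (insert Y Δ) Q → PRK Δ Q)
    (hP : SDeriv Γ P) (hX : SDeriv (insert X Γ) Q) (hY : SDeriv (insert Y Γ) Q) :
    SDeriv Γ Q := by
  obtain ⟨Δ, hΔ, d⟩ := hP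
  obtain ⟨ΔX, hΔX, dX⟩ := hX.exists_finset_insert
  obtain ⟨ΔY, hΔY, dY⟩ := hY.exists_finset_insert
  refine ⟨Δ ∪ ΔX ∪ ΔY, by simp [hΔ, hΔX, hΔY], rule (d.weaken ?_) (dX.weaken ?_) (dY.weaken ?_)⟩
  all_goals grind

theorem cut (hP : SDeriv Γ P) (hQ : SDeriv (insert P Γ) Q) : SDeriv Γ Q :=
  elim_cases (fun dP dQ _ => dP.cut dQ) hP hQ hQ

theorem exists_mem_of_sUnion {c : Set (Set MProp)} (hne : c.Nonempty)
    (hc : DirectedOn (· ⊆ ·) c) (h : SDeriv (⋃₀ c) P) : ∃ S ∈ c, SDeriv S P := by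
  obtain ⟨Δ, hΔ, d⟩ := h
  obtain ⟨S, hS, hΔS⟩ :=
    hc.exists_mem_subset_of_finite_of_subset_sUnion hne Δ.finite_toSet hΔ
  exact ⟨S, hS, Δ, hΔS, d⟩

end SDeriv

section MaximalNotDeriving

variable {M Γ : Set MProp} {P Q X Y : MProp}

theorem exists_maximal_not_sDeriv (h : ¬ SDeriv Γ Q) :
    ∃ M, Γ ⊆ M ∧ Maximal (¬ SDeriv · Q) M := by
  refine zorn_subset_nonempty {S | ¬ SDeriv S Q} (fun c hcQ hc hne => ?_) Γ h
  refine ⟨⋃₀ c, fun hQ => ?_, fun S hS => Set.subset_sUnion_of_mem hS⟩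
  obtain ⟨S, hS, hSQ⟩ := hQ.exists_mem_of_sUnion hne hc.directedOn
  exact hcQ hS hSQ

theorem sDeriv_insert_of_maximal_not_sDeriv (hM : Maximal (¬ SDeriv · Q) M) (hP : P ∉ M) :
    SDeriv (insert P M) Q :=
  not_not.1 (hM.not_prop_of_ssuperset (Set.ssubset_insert hP))

theorem mem_of_maximal_not_sDeriv (hM : Maximal (¬ SDeriv · Q) M) (hP : SDeriv M P) : P ∈ M := by
  by_contra hPM
  exact hM.prop (hP.cut (sDeriv_insert_of_maximal_not_sDeriv hM hPM))

theorem mem_or_mem_of_maximal_not_sDeriv (hM : Maximal (¬ SDeriv · Q) M)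
    (rule : ∀ {Δ : Finset MProp},
      PRK Δ P → PRK (insert X Δ) Q → PRK (insert Y Δ) Q → PRK Δ Q)
    (hP : P ∈ M) : X ∈ M ∨ Y ∈ M := by
  by_contra! ⟨hX, hY⟩
  exact hM.prop (.elim_cases rule (.of_mem hP)
    (sDeriv_insert_of_maximal_not_sDeriv hM hX) (sDeriv_insert_of_maximal_not_sDeriv hM hY))

theorem primeTheory_of_maximal_not_sDeriv (hM : Maximal (¬ SDeriv · Q) M) : PrimeTheory M :=
  ⟨fun _ => mem_of_maximal_not_sDeriv hM, ⟨Q, hM.prop⟩,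
    fun _ _ => mem_or_mem_of_maximal_not_sDeriv hM .eDisjP,
    fun _ _ => mem_or_mem_of_maximal_not_sDeriv hM .eConjN⟩

end MaximalNotDeriving

/-- Saturation lemma: any consistent Γ with Γ ⊬ Q extends to a prime theory Γ' with Γ' ⊬ Q. -/
theorem saturation (Γ : Set MProp) (Q : MProp)
    (hc : SetConsistent Γ) (hnd : ¬ SDeriv Γ Q) :
    ∃ Γ' : Set MProp, Γ ⊆ Γ' ∧ PrimeTheory Γ' ∧ ¬ SDeriv Γ' Q := by
  obtain ⟨M, hΓM, hM⟩ := exists_maximal_not_sDeriv hnd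
  exact ⟨M, hΓM, primeTheory_of_maximal_not_sDeriv hM, hM.prop⟩
end
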